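/- Consider the bilevel setting where g is L_g-gradient Lipschitz, ρ_g-Hessian Lipschitz, and μ-strongly convex in y; f is C_f-Lipschitz in y, L_f-gradient Lipschitz, and twice continuously differentiable. Define L*_λ(x) := min_y [f(x, y) + λ(g(x, y) − min_z g(x, z))]. Then for λ ≥ 2L_f/μ, the gradient ∇L*_λ is D₃-Lipschitz, where D₃ := L_f + 4L_f L_g/μ + C_f ρ_g/μ + C_f L_g ρ_g/μ² + L_g D₂ and D₂ := (1/μ + 2L_g/μ²)(L_f + C_f ρ_g/μ). -/

import Mathlib

/-!
Let `h = f + lam * g`, let `yl x` and `ys x` minimise `h (x, ·)` and `g (x, ·)`, and let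
`κ = Lg / μ`. For `lam > 0` both minimisers exist and are Lipschitz in `x`, with constants `1 + 2 κ`
and `κ` (`minimizer_lipschitz`), so the envelope theorem (`hasGradientAt_value`) gives
`∇L x = (∇h (x, yl x) - lam * ∇g (x, ys x))_x`; the `y`-components of both gradients vanish.

To compare `∇L` at `x` and `x' = x + u`, each difference of gradients of `g` is written as an averaged
Hessian applied to the displacement: `Hp (u, v)` along the segment between the points `(x, yl x)` and
`Hq (u, v')` along the segment between the points `(x, ys x)`. With `DF` the difference of `∇f`, the
change `e` of `∇L` is `DF + lam Hp (u, v) - lam Hq (u, v')`, a vector of `ℝ^{d_x} × {0}`. Both terms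
in `lam` are large, and the cancellation between them is made visible by pairing with a vector `(e, w)`
that `Hq` maps into `ℝ^{d_x} × {0}` (`exists_lift`): by symmetry of `Hq`, `v'` may then be replaced by
`v`, and `‖e‖ ^ 2 = ⟪DF, (e, w)⟫ + lam ⟪(Hp - Hq) (u, v), (e, w)⟫` (`schur_difference`).

The two minimisers over one `x` are `Cf / (lam μ)`-close (`minimizer_gap`), so
`lam ‖Hp - Hq‖ ≤ Cf ρg / μ`. With `‖v‖ ≤ (1 + 2 κ) ‖u‖` and `‖w‖ ≤ κ ‖e‖` this yields the Lipschitz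
constant `(Lf + Cf ρg / μ) (1 + 2 κ + 2 κ ^ 2)`, which is at most `D₃`. Averaging the Hessian takes
the place of differentiating `yl` and `ys` by the implicit function theorem.

The case `lam = 0` is separate, since the infimum over `y` need not be attained: there `Lf = 0`, `f`
is affine and the gradient of the value function is constant (`gradient_value_const_of_affine`).
-/

open Set

noncomputable section

/-- `ℝ^n` with the Euclidean norm. -/
abbrev Euc (n : ℕ) := EuclideanSpace ℝ (Fin n)

/-- The point `(x, y)` of the Euclidean (ℓ²) product `ℝ^{d_x} × ℝ^{d_y}`. -/
def pt {dx dy : ℕ} (x : Euc dx) (y : Euc dy) : WithLp 2 (Euc dx × Euc dy) :=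
  (WithLp.equiv 2 (Euc dx × Euc dy)).symm (x, y)

open scoped RealInnerProductSpace

/-! ### Coordinates in the product -/

section Basic

variable {dx dy : ℕ}

@[simp] lemma pt_fst (x : Euc dx) (y : Euc dy) : (pt x y).fst = x := rfl

@[simp] lemma pt_snd (x : Euc dx) (y : Euc dy) : (pt x y).snd = y := rfl

lemma pt_eta (q : WithLp 2 (Euc dx × Euc dy)) : pt q.fst q.snd = q := rfl

lemma pt_sub (x x' : Euc dx) (y y' : Euc dy) : pt x y - pt x' y' = pt (x - x') (y - y') := rfl

lemma pt_add (x x' : Euc dx) (y y' : Euc dy) : pt x y + pt x' y' = pt (x + x') (y + y') := rfl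

lemma smul_pt (t : ℝ) (x : Euc dx) (y : Euc dy) : t • pt x y = pt (t • x) (t • y) := rfl

lemma inner_pt (q : WithLp 2 (Euc dx × Euc dy)) (x : Euc dx) (y : Euc dy) :
    ⟪q, pt x y⟫ = ⟪q.fst, x⟫ + ⟪q.snd, y⟫ := WithLp.prod_inner_apply _ _

lemma norm_pt_sq (x : Euc dx) (y : Euc dy) : ‖pt x y‖ ^ 2 = ‖x‖ ^ 2 + ‖y‖ ^ 2 :=
  WithLp.prod_norm_sq_eq_of_L2 _

lemma norm_pt_zero_left (y : Euc dy) : ‖pt (0 : Euc dx) y‖ = ‖y‖ := by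
  have := norm_pt_sq (0 : Euc dx) y
  rw [norm_zero, zero_pow two_ne_zero, zero_add] at this
  exact (pow_left_inj₀ (norm_nonneg _) (norm_nonneg _) two_ne_zero).1 this

lemma norm_pt_zero_right (x : Euc dx) : ‖pt x (0 : Euc dy)‖ = ‖x‖ := by
  have := norm_pt_sq x (0 : Euc dy)
  rw [norm_zero, zero_pow two_ne_zero, add_zero] at this
  exact (pow_left_inj₀ (norm_nonneg _) (norm_nonneg _) two_ne_zero).1 this

lemma norm_pt_le (x : Euc dx) (y : Euc dy) : ‖pt x y‖ ≤ ‖x‖ + ‖y‖ := by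
  have h := norm_pt_sq x y
  nlinarith [norm_nonneg x, norm_nonneg y, norm_nonneg (pt x y)]

lemma continuous_pt (x : Euc dx) : Continuous (fun y : Euc dy => pt x y) := by
  unfold pt
  simp only [WithLp.equiv_symm_apply]
  fun_prop

end Basic

/-! ### Gradients and Hessians -/

section Gradient

variable {F : Type*} [NormedAddCommGroup F] [InnerProductSpace ℝ F] [CompleteSpace F]

lemma contDiff_gradient {g : F → ℝ} (hg : ContDiff ℝ 2 g) : ContDiff ℝ 1 (gradient g) := by
  have h1 : ContDiff ℝ 1 (fderiv ℝ g) := hg.fderiv_right (by norm_num)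
  let T : StrongDual ℝ F →L[ℝ] F :=
    LinearMap.mkContinuous
      { toFun := fun l => (InnerProductSpace.toDual ℝ F).symm l
        map_add' := by simp
        map_smul' := by simp } 1 (by simp)
  exact T.contDiff.comp h1

lemma inner_fderiv_gradient {g : F → ℝ} (hg : ContDiff ℝ 2 g) (q a b : F) :
    ⟪fderiv ℝ (gradient g) q a, b⟫ = fderiv ℝ (fderiv ℝ g) q a b := by
  have h1 : DifferentiableAt ℝ (gradient g) q :=
    (contDiff_gradient hg).differentiable (by norm_num) q
  have h2 : DifferentiableAt ℝ (fderiv ℝ g) q :=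
    (hg.fderiv_right (m := 1) (by norm_num)).differentiable (by norm_num) q
  have e : (fun r => ⟪gradient g r, b⟫) = fun r => fderiv ℝ g r b := by
    funext r; exact inner_gradient_left
  have d1 := (h1.hasFDerivAt.inner ℝ (hasFDerivAt_const b q))
  have d2 := h2.hasFDerivAt.clm_apply (hasFDerivAt_const b q)
  rw [e] at d1
  have := congrArg (fun l => l a) (d1.unique d2)
  simpa using this

lemma inner_hessian_symm {g : F → ℝ} (hg : ContDiff ℝ 2 g) (q a b : F) :
    ⟪fderiv ℝ (gradient g) q a, b⟫ = ⟪a, fderiv ℝ (gradient g) q b⟫ := by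
  rw [real_inner_comm _ a, inner_fderiv_gradient hg, inner_fderiv_gradient hg]
  exact (hg.contDiffAt.isSymmSndFDerivAt (by simp)) a b

/-- First-order Taylor estimate, with a non-optimal constant that is enough for differentiability. -/
lemma abs_taylor_le {h : F → ℝ} (hd : Differentiable ℝ h) {K : ℝ} (hK : 0 ≤ K)
    (hK' : ∀ q r, ‖gradient h q - gradient h r‖ ≤ K * ‖q - r‖) (q q' : F) :
    |h q' - h q - ⟪gradient h q, q' - q⟫| ≤ K * ‖q' - q‖ ^ 2 := by
  have key := (convex_closedBall q ‖q' - q‖).norm_image_sub_le_of_norm_fderiv_le' (𝕜 := ℝ)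
    (f := h) (φ := fderiv ℝ h q) (C := K * ‖q' - q‖) (x := q) (y := q')
    (fun r _ => hd r) (fun r hr => by
      rw [← toDual_gradient, ← toDual_gradient, ← map_sub, LinearIsometryEquiv.norm_map]
      refine (hK' r q).trans ?_
      gcongr
      simpa [dist_eq_norm] using hr) (by simp) (by simp [dist_eq_norm])
  rw [inner_gradient_left, ← Real.norm_eq_abs]
  refine key.trans (le_of_eq (by ring))

end Gradient

section Line

variable {F : Type*} [NormedAddCommGroup F] [InnerProductSpace ℝ F]

lemma hasDerivAt_line (q w : F) : HasDerivAt (fun t : ℝ => q + t • w) w 0 := by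
  simpa using ((hasDerivAt_id (0 : ℝ)).smul_const w).const_add q

lemma hasDerivAt_comp_line {G : Type*} [NormedAddCommGroup G] [NormedSpace ℝ G] {h : F → G}
    (hd : Differentiable ℝ h) (q w : F) :
    HasDerivAt (fun t : ℝ => h (q + t • w)) (fderiv ℝ h q w) 0 :=
  (hd q).hasFDerivAt.comp_hasDerivAt_of_eq (0 : ℝ) (hasDerivAt_line q w) (by simp)

/-- A lower bound on the derivative of a strongly monotone field, as the derivative of a monotone
function along a line. -/
lemma le_inner_fderiv_of_line {Φ : F → F} (hΦ : Differentiable ℝ Φ) {q w : F} {c : ℝ}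
    (h : ∀ s t : ℝ, s < t → (t - s) * c ≤ ⟪Φ (q + t • w) - Φ (q + s • w), w⟫) :
    c ≤ ⟪fderiv ℝ Φ q w, w⟫ := by
  have hmono : Monotone fun t : ℝ => ⟪Φ (q + t • w), w⟫ - t * c := by
    intro s t hst
    rcases hst.eq_or_lt with rfl | hst
    · rfl
    have := h s t hst
    rw [inner_sub_left] at this
    show ⟪Φ (q + s • w), w⟫ - s * c ≤ ⟪Φ (q + t • w), w⟫ - t * c
    linarith
  have h1 := (hasDerivAt_comp_line hΦ q w).inner ℝ (hasDerivAt_const (0 : ℝ) w)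
  have h2 := h1.sub ((hasDerivAt_id (0 : ℝ)).mul_const c)
  have h3 := hmono.deriv_nonneg (x := 0)
  have h4 : deriv (fun t : ℝ => ⟪Φ (q + t • w), w⟫ - t * c) 0 = _ := h2.deriv
  rw [h4] at h3
  simpa using h3

end Line

/-! ### Strong convexity, minimisers and the envelope theorem -/

section Convex

variable {dx dy : ℕ}

/-- First-order characterisation of strong convexity in the second variable. -/
lemma strong_convex_lower {g : WithLp 2 (Euc dx × Euc dy) → ℝ} {μ : ℝ}
    (hd : Differentiable ℝ g) {x : Euc dx}
    (hsc : ConvexOn ℝ univ (fun y : Euc dy => g (pt x y) - μ / 2 * ‖y‖ ^ 2)) (y y' : Euc dy) :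
    g (pt x y) + ⟪gradient g (pt x y), pt 0 (y' - y)⟫ + μ / 2 * ‖y' - y‖ ^ 2 ≤ g (pt x y') := by
  set d := y' - y with hdd
  have hc := hsc.comp_affineMap (AffineMap.lineMap y y' : ℝ →ᵃ[ℝ] Euc dy)
  rw [preimage_univ] at hc
  have h2 : HasDerivAt (fun t : ℝ => y + t • d) d 0 := hasDerivAt_line y d
  have h3 : HasDerivAt (fun t : ℝ => g (pt x y + t • pt 0 d))
      (fderiv ℝ g (pt x y) (pt 0 d)) 0 :=
    hasDerivAt_comp_line hd _ _
  have h4 := h3.sub (h2.norm_sq.const_mul (μ / 2))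
  have h5 : ((fun y : Euc dy => g (pt x y) - μ / 2 * ‖y‖ ^ 2) ∘
      (AffineMap.lineMap y y' : ℝ →ᵃ[ℝ] Euc dy)) =
      (fun t : ℝ => g (pt x y + t • pt 0 d)) - fun t : ℝ => μ / 2 * ‖y + t • d‖ ^ 2 := by
    funext t
    simp [AffineMap.lineMap_apply, smul_pt, pt_add, hdd, add_comm]
  rw [h5] at hc
  have h6 := hc.le_slope_of_hasDerivAt (mem_univ 0) (mem_univ 1) one_pos h4
  simp only [slope_def_field, Pi.sub_apply, one_smul, zero_smul, add_zero, sub_zero, div_one,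
    pt_add, add_zero] at h6
  have e : y + d = y' := by simp [hdd]
  have h7 : ‖y'‖ ^ 2 = ‖y‖ ^ 2 + 2 * ⟪y, d⟫ + ‖d‖ ^ 2 := by
    rw [← e]; exact norm_add_sq_real y d
  rw [e, h7] at h6
  rw [inner_gradient_left]
  linarith

lemma strong_monotone {g : WithLp 2 (Euc dx × Euc dy) → ℝ} {μ : ℝ}
    (hd : Differentiable ℝ g) {x : Euc dx}
    (hsc : ConvexOn ℝ univ (fun y : Euc dy => g (pt x y) - μ / 2 * ‖y‖ ^ 2)) (y y' : Euc dy) :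
    μ * ‖y' - y‖ ^ 2 ≤ ⟪gradient g (pt x y') - gradient g (pt x y), pt 0 (y' - y)⟫ := by
  have h1 := strong_convex_lower hd hsc y y'
  have h2 := strong_convex_lower hd hsc y' y
  have e : pt (0 : Euc dx) (y - y') = - pt 0 (y' - y) := by
    rw [← neg_sub y' y, ← neg_zero]; simp only [neg_zero]
    rw [← neg_one_smul ℝ (pt _ _), smul_pt]; simp
  rw [e, inner_neg_right, norm_sub_rev] at h2
  rw [inner_sub_left]
  linarith

/-- The `yy`-block of the Hessian inherits the strong convexity constant as a lower bound. -/
lemma hessian_lower {g : WithLp 2 (Euc dx × Euc dy) → ℝ} {μ : ℝ}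
    (hg : ContDiff ℝ 2 g)
    (hsc : ∀ x : Euc dx, ConvexOn ℝ univ (fun y : Euc dy => g (pt x y) - μ / 2 * ‖y‖ ^ 2))
    (q : WithLp 2 (Euc dx × Euc dy)) (v : Euc dy) :
    μ * ‖v‖ ^ 2 ≤ ⟪fderiv ℝ (gradient g) q (pt 0 v), pt 0 v⟫ := by
  refine le_inner_fderiv_of_line ((contDiff_gradient hg).differentiable one_ne_zero)
    fun s t hst => ?_
  have h := strong_monotone (hg.differentiable two_ne_zero) (hsc q.fst)
    (q.snd + s • v) (q.snd + t • v)
  have e1 : ∀ t : ℝ, pt q.fst (q.snd + t • v) = q + t • pt 0 v := by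
    intro t
    rw [smul_pt, smul_zero]
    conv_rhs => rw [← pt_eta q, pt_add, add_zero]
  have e2 : q.snd + t • v - (q.snd + s • v) = (t - s) • v := by module
  have e3 : pt (0 : Euc dx) ((t - s) • v) = (t - s) • pt 0 v := by rw [smul_pt, smul_zero]
  rw [e1, e1, e2, e3, inner_smul_right, norm_smul, mul_pow, Real.norm_eq_abs, sq_abs] at h
  have h0 : 0 < t - s := sub_pos.2 hst
  refine le_of_mul_le_mul_left ?_ h0
  linarith

/-- A continuous function that grows quadratically attains its minimum. -/
lemma exists_min {h : Euc dy → ℝ} (hc : Continuous h) {a b c : ℝ} (hpos : 0 < c)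
    (hlow : ∀ y, a - b * ‖y‖ + c * ‖y‖ ^ 2 ≤ h y) : ∃ y, ∀ y', h y ≤ h y' := by
  refine hc.exists_forall_le ?_
  have h1 : Filter.Tendsto (fun t : ℝ => a + t * (c * t - b)) Filter.atTop Filter.atTop := by
    refine Filter.tendsto_atTop_add_const_left _ _ (Filter.tendsto_id.atTop_mul_atTop₀ ?_)
    exact Filter.tendsto_atTop_add_const_right _ _ (Filter.tendsto_id.const_mul_atTop hpos)
  refine Filter.tendsto_atTop_mono (fun y => ?_) (h1.comp (tendsto_norm_cocompact_atTop (E := Euc dy)))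
  have := hlow y
  simp only [Function.comp_apply]
  linarith

/-- At a minimiser in `y`, the `y`-component of the gradient vanishes. -/
lemma gradient_snd_eq_zero {h : WithLp 2 (Euc dx × Euc dy) → ℝ} (hd : Differentiable ℝ h)
    {x : Euc dx} {y : Euc dy} (hmin : ∀ y', h (pt x y) ≤ h (pt x y')) :
    (gradient h (pt x y)).snd = 0 := by
  refine ext_inner_right ℝ fun d => ?_
  have h3 : HasDerivAt (fun t : ℝ => h (pt x y + t • pt 0 d))
      (fderiv ℝ h (pt x y) (pt 0 d)) 0 :=
    hasDerivAt_comp_line hd _ _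
  have h4 : IsLocalMin (fun t : ℝ => h (pt x y + t • pt 0 d)) 0 := by
    refine Filter.Eventually.of_forall fun t => ?_
    have := hmin (y + t • d)
    simpa [smul_pt, pt_add] using this
  have := h4.hasDerivAt_eq_zero h3
  rw [← inner_gradient_left, inner_pt] at this
  simpa using this

/-- Envelope theorem: if the minimiser in `y` is a Lipschitz function of `x`, the value function
is differentiable and its gradient is the `x`-component of the gradient. -/
lemma hasGradientAt_value {h : WithLp 2 (Euc dx × Euc dy) → ℝ} (hd : Differentiable ℝ h)
    {K C : ℝ} (hK : 0 ≤ K) (hK' : ∀ q r, ‖gradient h q - gradient h r‖ ≤ K * ‖q - r‖)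
    {Y : Euc dx → Euc dy} (hmin : ∀ x y', h (pt x (Y x)) ≤ h (pt x y'))
    (hY : ∀ x x', ‖Y x' - Y x‖ ≤ C * ‖x' - x‖) (x : Euc dx) :
    HasGradientAt (fun x => h (pt x (Y x))) (gradient h (pt x (Y x))).fst x := by
  rw [hasGradientAt_iff_isLittleO]
  have hO : (fun x' => h (pt x' (Y x')) - h (pt x (Y x)) -
      ⟪(gradient h (pt x (Y x))).fst, x' - x⟫) =O[nhds x] fun x' => ‖x' - x‖ ^ 2 := by
    refine Asymptotics.IsBigO.of_bound (K * (1 + C ^ 2)) (Filter.Eventually.of_forall fun x' => ?_)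
    have t1 := abs_le.1 (abs_taylor_le hd hK hK' (pt x (Y x)) (pt x' (Y x')))
    have t2 := abs_le.1 (abs_taylor_le hd hK hK' (pt x (Y x)) (pt x' (Y x)))
    rw [pt_sub, inner_pt, gradient_snd_eq_zero hd (hmin x), inner_zero_left, add_zero,
      norm_pt_sq] at t1 t2
    rw [sub_self, norm_zero] at t2
    have hb : ‖Y x' - Y x‖ ^ 2 ≤ C ^ 2 * ‖x' - x‖ ^ 2 := by
      rw [← mul_pow]; exact pow_le_pow_left₀ (norm_nonneg _) (hY x x') 2
    have hb' := mul_le_mul_of_nonneg_left hb hK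
    have hm := hmin x' (Y x)
    have hp : 0 ≤ K * (C ^ 2 * ‖x' - x‖ ^ 2) := by positivity
    rw [Real.norm_eq_abs, Real.norm_eq_abs, abs_of_nonneg (sq_nonneg ‖x' - x‖), abs_le]
    constructor <;> nlinarith
  refine hO.trans_isLittleO ?_
  have := Asymptotics.isLittleO_pow_sub_sub (E' := Euc dx) x (m := 2) one_lt_two
  simpa using this

end Convex

/-! ### Averaged Hessians -/

section AverageHessian

variable {F : Type*} [NormedAddCommGroup F] [InnerProductSpace ℝ F] [CompleteSpace F]

/-- The Hessian of `g` averaged over the segment from `p` to `p'`. -/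
def avgHessian (g : F → ℝ) (p p' : F) : F →L[ℝ] F :=
  ∫ t in (0 : ℝ)..1, fderiv ℝ (gradient g) (p + t • (p' - p))

lemma continuous_hessian_segment {g : F → ℝ} (hg : ContDiff ℝ 2 g) (p p' : F) :
    Continuous fun t : ℝ => fderiv ℝ (gradient g) (p + t • (p' - p)) :=
  ((contDiff_gradient hg).continuous_fderiv one_ne_zero).comp (by fun_prop)

lemma avgHessian_apply_sub {g : F → ℝ} (hg : ContDiff ℝ 2 g) (p p' : F) :
    avgHessian g p p' (p' - p) = gradient g p' - gradient g p := by
  have hc := continuous_hessian_segment hg p p'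
  rw [avgHessian, ContinuousLinearMap.intervalIntegral_apply (hc.intervalIntegrable _ _)]
  have hd : ∀ t ∈ uIcc (0 : ℝ) 1, HasDerivAt (fun t : ℝ => gradient g (p + t • (p' - p)))
      (fderiv ℝ (gradient g) (p + t • (p' - p)) (p' - p)) t := by
    intro t _
    have h1 : HasDerivAt (fun t : ℝ => p + t • (p' - p)) (p' - p) t := by
      simpa using ((hasDerivAt_id t).smul_const (p' - p)).const_add p
    exact ((contDiff_gradient hg).differentiable one_ne_zero _).hasFDerivAt.comp_hasDerivAt t h1
  rw [intervalIntegral.integral_eq_sub_of_hasDerivAt hd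
    ((hc.clm_apply continuous_const).intervalIntegrable _ _)]
  simp

lemma inner_avgHessian {g : F → ℝ} (hg : ContDiff ℝ 2 g) (p p' a b : F) :
    ⟪avgHessian g p p' a, b⟫ =
      ∫ t in (0 : ℝ)..1, ⟪fderiv ℝ (gradient g) (p + t • (p' - p)) a, b⟫ := by
  have hc := continuous_hessian_segment hg p p'
  rw [avgHessian, ContinuousLinearMap.intervalIntegral_apply (hc.intervalIntegrable _ _),
    real_inner_comm]
  have := (innerSL ℝ b).intervalIntegral_comp_comm
    ((hc.clm_apply (continuous_const (y := a))).intervalIntegrable (μ := MeasureTheory.volume) 0 1)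
  simp only [innerSL_apply_apply] at this
  rw [← this]
  exact intervalIntegral.integral_congr fun t _ => real_inner_comm _ _

lemma avgHessian_symm {g : F → ℝ} (hg : ContDiff ℝ 2 g) (p p' a b : F) :
    ⟪avgHessian g p p' a, b⟫ = ⟪a, avgHessian g p p' b⟫ := by
  rw [real_inner_comm _ a, inner_avgHessian hg, inner_avgHessian hg]
  refine intervalIntegral.integral_congr fun t _ => ?_
  rw [inner_hessian_symm hg, real_inner_comm]

lemma norm_avgHessian_le {g : F → ℝ} {L : ℝ} (hL : 0 ≤ L)
    (h : ∀ q r, ‖gradient g q - gradient g r‖ ≤ L * ‖q - r‖) (p p' : F) :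
    ‖avgHessian g p p'‖ ≤ L := by
  have := intervalIntegral.norm_integral_le_of_norm_le_const (a := (0 : ℝ)) (b := 1) (C := L)
    (f := fun t : ℝ => fderiv ℝ (gradient g) (p + t • (p' - p)))
    (fun t _ => norm_fderiv_le_of_lip' ℝ hL (Filter.Eventually.of_forall fun q => h q _))
  simpa [avgHessian] using this

lemma le_inner_avgHessian {g : F → ℝ} (hg : ContDiff ℝ 2 g) {c : ℝ} {w : F}
    (h : ∀ q, c ≤ ⟪fderiv ℝ (gradient g) q w, w⟫) (p p' : F) :
    c ≤ ⟪avgHessian g p p' w, w⟫ := by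
  rw [inner_avgHessian hg]
  have := intervalIntegral.integral_mono_on (a := (0 : ℝ)) (b := 1) (μ := MeasureTheory.volume)
    zero_le_one (f := fun _ => c)
    (g := fun t : ℝ => ⟪fderiv ℝ (gradient g) (p + t • (p' - p)) w, w⟫)
    (continuous_const.intervalIntegrable _ _)
    ((((continuous_hessian_segment hg p p').clm_apply continuous_const).inner
      continuous_const).intervalIntegrable _ _) (fun t _ => h _)
  simpa using this

/-- Averages of a Lipschitz Hessian over two segments differ in proportion to the distance between
the segments, which is attained at their ends. -/
lemma norm_avgHessian_sub_le {g : F → ℝ} (hg : ContDiff ℝ 2 g) {ρ : ℝ} (hρ : 0 ≤ ρ)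
    (h : ∀ q r, ‖fderiv ℝ (gradient g) q - fderiv ℝ (gradient g) r‖ ≤ ρ * ‖q - r‖)
    {p p' q q' : F} {δ : ℝ} (h0 : ‖p - q‖ ≤ δ) (h1 : ‖p' - q'‖ ≤ δ) :
    ‖avgHessian g p p' - avgHessian g q q'‖ ≤ ρ * δ := by
  rw [avgHessian, avgHessian, ← intervalIntegral.integral_sub
    ((continuous_hessian_segment hg p p').intervalIntegrable _ _)
    ((continuous_hessian_segment hg q q').intervalIntegrable _ _)]
  have := intervalIntegral.norm_integral_le_of_norm_le_const (a := (0 : ℝ)) (b := 1) (C := ρ * δ)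
    (f := fun t : ℝ => fderiv ℝ (gradient g) (p + t • (p' - p))
      - fderiv ℝ (gradient g) (q + t • (q' - q))) (fun t ht => by
      rw [uIoc_of_le zero_le_one] at ht
      refine (h _ _).trans (mul_le_mul_of_nonneg_left ?_ hρ)
      have e : p + t • (p' - p) - (q + t • (q' - q)) = (1 - t) • (p - q) + t • (p' - q') := by
        module
      rw [e]
      refine (norm_add_le _ _).trans ?_
      rw [norm_smul, norm_smul, Real.norm_of_nonneg (sub_nonneg.2 ht.2),
        Real.norm_of_nonneg ht.1.le]
      nlinarith [mul_le_mul_of_nonneg_left h0 (sub_nonneg.2 ht.2),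
        mul_le_mul_of_nonneg_left h1 ht.1.le])
  simpa using this

end AverageHessian

/-! ### Schur complements -/

section Block

variable {dx dy : ℕ}

/-- If the `yy`-block of `H` is bounded below, every `e` lifts to a vector `(e, w)` that `H` maps
into `ℝ^{d_x} × {0}`; here `w = -H_yy⁻¹ H_yx e`. -/
lemma exists_lift {H : WithLp 2 (Euc dx × Euc dy) →L[ℝ] WithLp 2 (Euc dx × Euc dy)} {μ L : ℝ}
    (hμ : 0 < μ) (hL : ‖H‖ ≤ L) (hH : ∀ v : Euc dy, μ * ‖v‖ ^ 2 ≤ ⟪H (pt 0 v), pt 0 v⟫)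
    (e : Euc dx) : ∃ w : Euc dy, (H (pt e w)).snd = 0 ∧ ‖w‖ ≤ L / μ * ‖e‖ := by
  let A : Euc dy →ₗ[ℝ] Euc dy :=
    { toFun := fun v => (H (pt 0 v)).snd
      map_add' := fun v w => by
        rw [← WithLp.add_snd, ← map_add, pt_add, add_zero]
      map_smul' := fun c v => by
        rw [RingHom.id_apply, ← WithLp.smul_snd, ← map_smul, smul_pt, smul_zero] }
  have hA : ∀ v, ⟪H (pt 0 v), pt 0 v⟫ = ⟪A v, v⟫ := fun v => by
    rw [inner_pt, inner_zero_right, zero_add]; rfl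
  have hinj : Function.Injective A := by
    rw [injective_iff_map_eq_zero]
    intro v hv
    have := hH v
    rw [hA, hv, inner_zero_left] at this
    have h0 : ‖v‖ ^ 2 ≤ 0 := by
      by_contra hcon
      exact absurd this (not_le.2 (mul_pos hμ (not_le.1 hcon)))
    exact norm_eq_zero.1 (pow_eq_zero_iff two_ne_zero |>.1 (le_antisymm h0 (sq_nonneg _)))
  obtain ⟨w, hw⟩ := LinearMap.injective_iff_surjective.1 hinj (-(H (pt e 0)).snd)
  refine ⟨w, ?_, ?_⟩
  · have : pt e w = pt e 0 + pt 0 w := by rw [pt_add, add_zero, zero_add]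
    rw [this, map_add, WithLp.add_snd]
    change _ + A w = 0
    rw [hw, add_neg_cancel]
  · have h1 := hH w
    rw [hA, hw, inner_neg_left] at h1
    have h2 : ⟪(H (pt e 0)).snd, w⟫ = ⟪H (pt e 0), pt 0 w⟫ := by
      rw [inner_pt, inner_zero_right, zero_add]
    have h3 := abs_le.1 (abs_real_inner_le_norm (H (pt e 0)) (pt 0 w))
    have h4 : ‖H (pt e 0)‖ ≤ L * ‖e‖ := by
      refine (H.le_of_opNorm_le hL _).trans ?_
      rw [norm_pt_zero_right]
    rw [norm_pt_zero_left] at h3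
    have h5 : μ * ‖w‖ ^ 2 ≤ L * ‖e‖ * ‖w‖ := by
      have := mul_le_mul_of_nonneg_right h4 (norm_nonneg w)
      rw [h2] at h1
      linarith [h3.1]
    rw [div_mul_eq_mul_div, le_div_iff₀ hμ]
    rcases (norm_nonneg w).eq_or_lt with h0 | h0
    · rw [← h0, zero_mul]
      exact mul_nonneg ((norm_nonneg H).trans hL) (norm_nonneg e)
    · refine le_of_mul_le_mul_right ?_ h0
      linarith

/-- Bilinear formula for a difference of Schur complements: the `H_q`-lift `(e, w)` of `e` turns the
difference of the two reduced systems into a form in `DF` and `H_p - H_q` alone. -/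
lemma schur_difference
    {Hp Hq : WithLp 2 (Euc dx × Euc dy) →L[ℝ] WithLp 2 (Euc dx × Euc dy)}
    (hsymm : ∀ a b, ⟪Hq a, b⟫ = ⟪a, Hq b⟫) {lam : ℝ} {DF : WithLp 2 (Euc dx × Euc dy)}
    {u e : Euc dx} {v v' w : Euc dy} (hp : (DF + lam • Hp (pt u v)).snd = 0)
    (hq : (Hq (pt u v')).snd = 0) (he : (Hq (pt e w)).snd = 0) :
    ⟪(DF + lam • Hp (pt u v) - lam • Hq (pt u v')).fst, e⟫ =
      ⟪DF, pt e w⟫ + lam * ⟪(Hp - Hq) (pt u v), pt e w⟫ := by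
  have h1 : ⟪Hq (pt u v'), pt e w⟫ = ⟪Hq (pt u v), pt e w⟫ := by
    rw [hsymm, hsymm, real_inner_comm, real_inner_comm _ (pt u v), inner_pt, inner_pt, he,
      inner_zero_left, inner_zero_left]
  have h2 : ⟪(DF + lam • Hp (pt u v) - lam • Hq (pt u v')).fst, e⟫ =
      ⟪DF + lam • Hp (pt u v) - lam • Hq (pt u v'), pt e w⟫ := by
    have : (DF + lam • Hp (pt u v) - lam • Hq (pt u v')).snd = 0 := by
      rw [WithLp.sub_snd, hp, WithLp.smul_snd, hq, smul_zero, sub_zero]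
    rw [inner_pt, this, inner_zero_left, add_zero]
  rw [h2, inner_sub_left, inner_add_left, inner_smul_left, inner_smul_left, h1,
    sub_apply, inner_sub_left]
  simp only [conj_trivial]
  ring

end Block

/-! ### The penalty function -/

section Penalty

variable {dx dy : ℕ}

lemma iInf_eq_of_min {ι : Type*} {φ : ι → ℝ} {i : ι} (h : ∀ j, φ i ≤ φ j) : ⨅ j, φ j = φ i :=
  haveI : Nonempty ι := ⟨i⟩
  le_antisymm (ciInf_le ⟨φ i, forall_mem_range.2 h⟩ i) (le_ciInf h)

lemma HasGradientAt.add_const_mul {F : Type*} [NormedAddCommGroup F] [InnerProductSpace ℝ F]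
    [CompleteSpace F] {f g : F → ℝ} {a b q : F} (hf : HasGradientAt f a q)
    (hg : HasGradientAt g b q) (c : ℝ) :
    HasGradientAt (fun r => f r + c * g r) (a + c • b) q := by
  rw [hasGradientAt_iff_hasFDerivAt] at *
  refine (hf.add (hg.const_mul c)).congr_fderiv ?_
  ext w
  simp

/-- Minimisers in `y` of a function with Lipschitz gradient, strongly monotone in `y`, depend on
`x` in a Lipschitz way. -/
lemma minimizer_lipschitz {h : WithLp 2 (Euc dx × Euc dy) → ℝ} (hd : Differentiable ℝ h)
    {m K : ℝ} (hm : 0 < m) (hK : 0 ≤ K)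
    (hmono : ∀ x y y', m * ‖y' - y‖ ^ 2 ≤
      ⟪gradient h (pt x y') - gradient h (pt x y), pt 0 (y' - y)⟫)
    (hK' : ∀ q r, ‖gradient h q - gradient h r‖ ≤ K * ‖q - r‖)
    {Y : Euc dx → Euc dy} (hmin : ∀ x y', h (pt x (Y x)) ≤ h (pt x y')) (x x' : Euc dx) :
    ‖Y x' - Y x‖ ≤ K / m * ‖x' - x‖ := by
  set d := Y x' - Y x with hd'
  have h1 := hmono x' (Y x) (Y x')
  rw [← hd'] at h1
  have h2 : ⟪gradient h (pt x' (Y x')) - gradient h (pt x' (Y x)), pt 0 d⟫ =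
      ⟪gradient h (pt x (Y x)) - gradient h (pt x' (Y x)), pt 0 d⟫ := by
    rw [inner_sub_left, inner_sub_left, inner_pt, inner_pt _ _ d,
      inner_pt (gradient h (pt x (Y x))), gradient_snd_eq_zero hd (hmin x),
      gradient_snd_eq_zero hd (hmin x')]
    simp only [inner_zero_left, inner_zero_right]
  have h3 := (real_inner_le_norm (gradient h (pt x (Y x)) - gradient h (pt x' (Y x)))
    (pt 0 d)).trans (mul_le_mul_of_nonneg_right (hK' _ _) (norm_nonneg _))
  rw [pt_sub, sub_self, norm_pt_zero_right, norm_pt_zero_left, norm_sub_rev x x'] at h3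
  rw [div_mul_eq_mul_div, le_div_iff₀ hm]
  rcases (norm_nonneg d).eq_or_lt with h0 | h0
  · rw [← h0, zero_mul]; positivity
  · refine le_of_mul_le_mul_right ?_ h0
    linarith

lemma abs_inner_gradient_snd_le {f : WithLp 2 (Euc dx × Euc dy) → ℝ} (hd : Differentiable ℝ f)
    {Cf : ℝ} (hCf : 0 ≤ Cf)
    (hf : ∀ x : Euc dx, ∀ y y' : Euc dy, |f (pt x y) - f (pt x y')| ≤ Cf * ‖y - y'‖)
    (q : WithLp 2 (Euc dx × Euc dy)) (d : Euc dy) :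
    |⟪gradient f q, pt 0 d⟫| ≤ Cf * ‖d‖ := by
  have h1 := hasDerivAt_comp_line hd q (pt 0 d)
  have h2 := h1.hasFDerivAt.le_of_lip' (C := Cf * ‖d‖) (by positivity)
    (Filter.Eventually.of_forall fun t => by
      have e1 : q + t • pt 0 d = pt q.fst (q.snd + t • d) := by
        rw [smul_pt, smul_zero]
        conv_lhs => rw [← pt_eta q, pt_add, add_zero]
      have := hf q.fst (q.snd + t • d) q.snd
      rw [pt_eta, add_sub_cancel_left, norm_smul] at this
      rw [zero_smul, add_zero, e1, Real.norm_eq_abs, sub_zero]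
      linarith)
  rw [inner_gradient_left]
  simpa using h2

lemma norm_pt_mul_norm_pt_le {u e : Euc dx} {v w : Euc dy} {κ : ℝ}
    (hκ : 0 ≤ κ) (hv : ‖v‖ ≤ (1 + 2 * κ) * ‖u‖) (hw : ‖w‖ ≤ κ * ‖e‖)
    (h : 1 ≤ κ ∨ (v = 0 ∧ w = 0)) :
    ‖pt u v‖ * ‖pt e w‖ ≤ (1 + 2 * κ + 2 * κ ^ 2) * (‖u‖ * ‖e‖) := by
  rcases h with h | ⟨rfl, rfl⟩
  · refine le_of_sq_le_sq ?_ (by positivity)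
    have h1 : ‖pt u v‖ ^ 2 ≤ (1 + (1 + 2 * κ) ^ 2) * ‖u‖ ^ 2 := by
      rw [norm_pt_sq]
      have := pow_le_pow_left₀ (norm_nonneg _) hv 2
      rw [mul_pow] at this
      linarith
    have h2 : ‖pt e w‖ ^ 2 ≤ (1 + κ ^ 2) * ‖e‖ ^ 2 := by
      rw [norm_pt_sq]
      have := pow_le_pow_left₀ (norm_nonneg _) hw 2
      rw [mul_pow] at this
      linarith
    have h3 : (1 + (1 + 2 * κ) ^ 2) * (1 + κ ^ 2) ≤ (1 + 2 * κ + 2 * κ ^ 2) ^ 2 := by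
      nlinarith [mul_nonneg hκ (sq_nonneg κ), mul_nonneg (sub_nonneg.2 h) hκ]
    calc (‖pt u v‖ * ‖pt e w‖) ^ 2 = ‖pt u v‖ ^ 2 * ‖pt e w‖ ^ 2 := by ring
      _ ≤ ((1 + (1 + 2 * κ) ^ 2) * ‖u‖ ^ 2) * ((1 + κ ^ 2) * ‖e‖ ^ 2) := by gcongr
      _ = ((1 + (1 + 2 * κ) ^ 2) * (1 + κ ^ 2)) * (‖u‖ ^ 2 * ‖e‖ ^ 2) := by ring
      _ ≤ (1 + 2 * κ + 2 * κ ^ 2) ^ 2 * (‖u‖ ^ 2 * ‖e‖ ^ 2) := by gcongr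
      _ = _ := by ring
  · rw [norm_pt_zero_right, norm_pt_zero_right]
    have : 0 ≤ (2 * κ + 2 * κ ^ 2) * (‖u‖ * ‖e‖) := by positivity
    linarith

/-- When `lam = 0` the hypothesis on `lam` forces `Lf = 0`, so `f` is affine. The value function is
then affine too, or is identically the junk value `0` if `f` is unbounded below in `y`; either way
its gradient is constant. -/
lemma gradient_value_const_of_affine {f : WithLp 2 (Euc dx × Euc dy) → ℝ}
    (hd : Differentiable ℝ f) (hf : ∀ q r, gradient f q = gradient f r) (x x' : Euc dx) :
    gradient (fun x => ⨅ y : Euc dy, f (pt x y)) x =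
      gradient (fun x => ⨅ y : Euc dy, f (pt x y)) x' := by
  set c := gradient f 0 with hc
  have haff : ∀ x y, f (pt x y) = (f 0 + ⟪c.fst, x⟫) + ⟪c.snd, y⟫ := by
    intro x y
    have := abs_taylor_le hd le_rfl (fun q r => by simp [hf q r]) 0 (pt x y)
    rw [zero_mul, abs_nonpos_iff, sub_zero, inner_pt] at this
    linarith
  simp only [haff]
  by_cases hb : BddBelow (range fun y : Euc dy => ⟪c.snd, y⟫)
  · have h1 : ∀ x, (⨅ y : Euc dy, (f 0 + ⟪c.fst, x⟫ + ⟪c.snd, y⟫)) =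
        f 0 + ⟪c.fst, x⟫ + ⨅ y : Euc dy, ⟪c.snd, y⟫ := fun x => (add_ciInf hb _).symm
    simp only [h1]
    have h2 : ∀ x, HasGradientAt
        (fun x => f 0 + ⟪c.fst, x⟫ + ⨅ y : Euc dy, ⟪c.snd, y⟫) c.fst x := by
      intro x
      rw [hasGradientAt_iff_hasFDerivAt]
      exact (((InnerProductSpace.toDual ℝ (Euc dx) c.fst).hasFDerivAt).const_add _).add_const _
    rw [(h2 x).gradient, (h2 x').gradient]
  · have h1 : ∀ x, (⨅ y : Euc dy, (f 0 + ⟪c.fst, x⟫ + ⟪c.snd, y⟫)) = 0 := by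
      intro x
      refine Real.iInf_of_not_bddBelow fun ⟨b, hb'⟩ => hb ⟨b - (f 0 + ⟪c.fst, x⟫), ?_⟩
      rintro _ ⟨y, rfl⟩
      have := hb' ⟨y, rfl⟩
      simp only at this ⊢
      linarith
    simp only [h1, gradient_fun_const]

/-- Minimisers of `g` and of `f + lam * g` in `y` are `Cf / (lam * μ)`-close: `μ`-monotonicity of
`∇_y g` is tested against the stationarity `lam * ∇_y g = -∇_y f` of the second one. -/
lemma minimizer_gap {f g : WithLp 2 (Euc dx × Euc dy) → ℝ} (hdf : Differentiable ℝ f)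
    {μ Cf lam : ℝ} (hμ : 0 < μ) (hl : 0 < lam) (hCf : 0 ≤ Cf)
    (hf_lipy : ∀ x : Euc dx, ∀ y y' : Euc dy, |f (pt x y) - f (pt x y')| ≤ Cf * ‖y - y'‖)
    {x : Euc dx} {ys yl : Euc dy}
    (hmono : μ * ‖yl - ys‖ ^ 2 ≤ ⟪gradient g (pt x yl) - gradient g (pt x ys), pt 0 (yl - ys)⟫)
    (hs : (gradient g (pt x ys)).snd = 0)
    (hst : (gradient f (pt x yl) + lam • gradient g (pt x yl)).snd = 0) :
    ‖pt x yl - pt x ys‖ ≤ Cf / (lam * μ) := by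
  rw [pt_sub, sub_self, norm_pt_zero_left, le_div_iff₀ (mul_pos hl hμ)]
  set d := yl - ys with hd
  have h1 := mul_le_mul_of_nonneg_left hmono hl.le
  rw [WithLp.add_snd, WithLp.smul_snd] at hst
  have h4 := (abs_le.1 (abs_inner_gradient_snd_le hdf hCf hf_lipy (pt x yl) d)).1
  have h5 := congrArg (fun z => ⟪z, d⟫) hst
  simp only [inner_add_left, inner_smul_left, conj_trivial, inner_zero_left] at h5
  rw [inner_sub_left, inner_pt, inner_pt (gradient g (pt x ys)), hs, inner_zero_right,
    inner_zero_right, inner_zero_left] at h1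
  rw [inner_pt, inner_zero_right] at h4
  rcases (norm_nonneg d).eq_or_lt with h0 | h0
  · rw [← h0, zero_mul]; exact hCf
  · refine le_of_mul_le_mul_right ?_ h0
    linarith

/-- The penalty gradient changes by at most
`(Lf + Cf ρg / μ) (1 + 2 Lg / μ + 2 (Lg / μ) ^ 2) ‖u‖` between two base points at distance `‖u‖`.
Here `p`, `p'` are the stationary points of `f + lam * g` over the two base points and `q`, `q'`
those of `g`. -/
lemma penalty_gradient_bound {f g : WithLp 2 (Euc dx × Euc dy) → ℝ} {μ Cf Lf Lg ρg lam : ℝ}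
    (hμ : 0 < μ) (hCf : 0 ≤ Cf) (hLf : 0 ≤ Lf) (hLg : 0 ≤ Lg) (hρg : 0 ≤ ρg) (hl : 0 < lam)
    (hgC2 : ContDiff ℝ 2 g)
    (hg_smooth : ∀ q r, ‖gradient g q - gradient g r‖ ≤ Lg * ‖q - r‖)
    (hg_hess : ∀ q r, ‖fderiv ℝ (gradient g) q - fderiv ℝ (gradient g) r‖ ≤ ρg * ‖q - r‖)
    (hg_sc : ∀ x : Euc dx,
      ConvexOn ℝ univ (fun y : Euc dy => g (pt x y) - μ / 2 * ‖y‖ ^ 2))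
    (hf_smooth : ∀ q r, ‖gradient f q - gradient f r‖ ≤ Lf * ‖q - r‖)
    {p p' q q' : WithLp 2 (Euc dx × Euc dy)} {u : Euc dx} {v v' : Euc dy}
    (hpp : p' - p = pt u v) (hqq : q' - q = pt u v')
    (hvb : ‖v‖ ≤ (1 + 2 * (Lg / μ)) * ‖u‖)
    (hgap : ‖p - q‖ ≤ Cf / (lam * μ)) (hgap' : ‖p' - q'‖ ≤ Cf / (lam * μ))
    (hp : (gradient f p + lam • gradient g p).snd = 0)
    (hp' : (gradient f p' + lam • gradient g p').snd = 0)
    (hq : (gradient g q).snd = 0) (hq' : (gradient g q').snd = 0) :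
    ‖((gradient f p' + lam • gradient g p') - (gradient f p + lam • gradient g p)
        - lam • (gradient g q' - gradient g q)).fst‖ ≤
      (Lf + Cf * ρg / μ) * (1 + 2 * (Lg / μ) + 2 * (Lg / μ) ^ 2) * ‖u‖ := by
  have hlam0 := hl.le
  set Hp := avgHessian g p p' with hHp
  set Hq := avgHessian g q q' with hHq
  have hHp_app : Hp (pt u v) = gradient g p' - gradient g p := by
    rw [← hpp, hHp, avgHessian_apply_sub hgC2]
  have hHq_app : Hq (pt u v') = gradient g q' - gradient g q := by
    rw [← hqq, hHq, avgHessian_apply_sub hgC2]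
  have hHq_norm : ‖Hq‖ ≤ Lg := norm_avgHessian_le hLg hg_smooth q q'
  have hHq_low : ∀ v : Euc dy, μ * ‖v‖ ^ 2 ≤ ⟪Hq (pt 0 v), pt 0 v⟫ := fun v =>
    le_inner_avgHessian hgC2 (fun r => hessian_lower hgC2 hg_sc r v) q q'
  have hHdiff : ‖Hp - Hq‖ ≤ ρg * (Cf / (lam * μ)) :=
    norm_avgHessian_sub_le hgC2 hρg hg_hess hgap hgap'
  set DF := gradient f p' - gradient f p with hDF
  have hsum : DF + lam • Hp (pt u v) =
      (gradient f p' + lam • gradient g p') - (gradient f p + lam • gradient g p) := by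
    rw [hHp_app, hDF]; module
  have hp0 : (DF + lam • Hp (pt u v)).snd = 0 := by
    rw [hsum, WithLp.sub_snd, hp, hp', sub_zero]
  have hq0 : (Hq (pt u v')).snd = 0 := by
    rw [hHq_app, WithLp.sub_snd, hq, hq', sub_zero]
  rw [← hsum, ← hHq_app]
  set e : Euc dx := (DF + lam • Hp (pt u v) - lam • Hq (pt u v')).fst with he
  obtain ⟨w, hw0, hw⟩ := exists_lift hμ hHq_norm hHq_low e
  have hschur := schur_difference (avgHessian_symm hgC2 q q') hp0 hq0 hw0
  rw [← he, real_inner_self_eq_norm_sq] at hschur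
  have hκ0 : 0 ≤ Lg / μ := by positivity
  -- `μ ≤ Lg` can only fail when `ℝ^{d_y}` is trivial.
  have hκ1 : 1 ≤ Lg / μ ∨ (v = 0 ∧ w = 0) := by
    by_cases hc : μ ≤ Lg
    · exact Or.inl ((one_le_div hμ).2 hc)
    · have hz : ∀ z : Euc dy, z = 0 := by
        intro z
        have h1 := hHq_low z
        have h2 := real_inner_le_norm (Hq (pt 0 z)) (pt 0 z)
        have h3 := mul_le_mul_of_nonneg_right (Hq.le_of_opNorm_le hHq_norm (pt 0 z))
          (norm_nonneg (pt (0 : Euc dx) z))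
        rw [norm_pt_zero_left] at h2 h3
        by_contra hne
        have h4 : 0 < ‖z‖ ^ 2 := by positivity
        nlinarith [mul_pos (sub_pos.2 (not_le.1 hc)) h4]
      exact Or.inr ⟨hz v, hz w⟩
  have hM := norm_pt_mul_norm_pt_le hκ0 hvb hw hκ1
  have hDFn : ‖DF‖ ≤ Lf * ‖pt u v‖ := hpp ▸ hf_smooth p' p
  have hb1 : ⟪DF, pt e w⟫ ≤ Lf * (‖pt u v‖ * ‖pt e w‖) := by
    refine (real_inner_le_norm _ _).trans ?_
    rw [← mul_assoc]
    exact mul_le_mul_of_nonneg_right hDFn (norm_nonneg _)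
  have hb2 : lam * ⟪(Hp - Hq) (pt u v), pt e w⟫ ≤ Cf * ρg / μ * (‖pt u v‖ * ‖pt e w‖) := by
    have h1 : ⟪(Hp - Hq) (pt u v), pt e w⟫ ≤
        ρg * (Cf / (lam * μ)) * (‖pt u v‖ * ‖pt e w‖) := by
      refine (real_inner_le_norm _ _).trans ?_
      rw [← mul_assoc]
      exact mul_le_mul_of_nonneg_right ((Hp - Hq).le_of_opNorm_le hHdiff _) (norm_nonneg _)
    refine (mul_le_mul_of_nonneg_left h1 hlam0).trans (le_of_eq ?_)
    field_simp
  have hS : 0 ≤ Lf + Cf * ρg / μ := by positivity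
  have hM' := mul_le_mul_of_nonneg_left hM hS
  have hfin : ‖e‖ ^ 2 ≤
      (Lf + Cf * ρg / μ) * (1 + 2 * (Lg / μ) + 2 * (Lg / μ) ^ 2) * ‖u‖ * ‖e‖ := by
    rw [hschur]; linarith
  rcases (norm_nonneg e).eq_or_lt with h0 | h0
  · rw [← h0]; positivity
  · refine le_of_mul_le_mul_right ?_ h0
    linarith

end Penalty

/-! ### Lipschitz bound for the gradient -/

/-- Lemma of Chen et al.: under the standard bilevel assumptions, for
`λ ≥ 2 L_f / μ`, the gradient of `L*_λ(x) := min_y [f(x,y) + λ (g(x,y) - min_z g(x,z))]`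
is `D₃`-Lipschitz, with
`D₃ := L_f + 4 L_f L_g/μ + C_f ρ_g/μ + C_f L_g ρ_g/μ² + L_g D₂` and
`D₂ := (1/μ + 2 L_g/μ²)(L_f + C_f ρ_g/μ)`. -/
theorem penalty_objective_gradient_lipschitz
    {dx dy : ℕ} (f g : WithLp 2 (Euc dx × Euc dy) → ℝ)
    (μ Cf Lf Lg ρg : ℝ)
    (hμ : 0 < μ) (hCf : 0 ≤ Cf) (hLf : 0 ≤ Lf) (hLg : 0 ≤ Lg) (hρg : 0 ≤ ρg)
    (hgC2 : ContDiff ℝ 2 g)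
    (hg_smooth : ∀ q r, ‖gradient g q - gradient g r‖ ≤ Lg * ‖q - r‖)
    (hg_hess : ∀ q r, ‖fderiv ℝ (gradient g) q - fderiv ℝ (gradient g) r‖ ≤ ρg * ‖q - r‖)
    (hg_sc : ∀ x : Euc dx,
      ConvexOn ℝ univ (fun y : Euc dy => g (pt x y) - μ / 2 * ‖y‖ ^ 2))
    (hf_lipy : ∀ x : Euc dx, ∀ y y' : Euc dy, |f (pt x y) - f (pt x y')| ≤ Cf * ‖y - y'‖)
    (hf_smooth : ∀ q r, ‖gradient f q - gradient f r‖ ≤ Lf * ‖q - r‖)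
    (hfC2 : ContDiff ℝ 2 f)
    (lam : ℝ) (hlam : 2 * Lf / μ ≤ lam) :
    ∀ x x' : Euc dx,
      ‖gradient (fun x'' => ⨅ y : Euc dy,
            (f (pt x'' y) + lam * (g (pt x'' y) - ⨅ z : Euc dy, g (pt x'' z)))) x
        - gradient (fun x'' => ⨅ y : Euc dy,
            (f (pt x'' y) + lam * (g (pt x'' y) - ⨅ z : Euc dy, g (pt x'' z)))) x'‖
      ≤ (Lf + 4 * Lf * Lg / μ + Cf * ρg / μ + Cf * Lg * ρg / μ ^ 2
          + Lg * ((1 / μ + 2 * Lg / μ ^ 2) * (Lf + Cf * ρg / μ))) * ‖x - x'‖ := by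
  intro x x'
  have hdf : Differentiable ℝ f := hfC2.differentiable two_ne_zero
  have hdg : Differentiable ℝ g := hgC2.differentiable two_ne_zero
  have hLfl : 2 * Lf ≤ lam * μ := (div_le_iff₀ hμ).1 hlam
  have hlam0 : 0 ≤ lam := le_trans (by positivity) hlam
  rcases hlam0.eq_or_lt with rfl | hl
  · have hLf0 : Lf = 0 := by linarith
    have hconst : ∀ q r, gradient f q = gradient f r := fun q r => by
      have := hf_smooth q r
      rw [hLf0, zero_mul, norm_le_zero_iff, sub_eq_zero] at this
      exact this
    simp only [zero_mul, add_zero]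
    rw [gradient_value_const_of_affine hdf hconst x x', sub_self, norm_zero]
    positivity
  have hlμ : 0 < lam * μ := mul_pos hl hμ
  set h : WithLp 2 (Euc dx × Euc dy) → ℝ := fun q => f q + lam * g q with hh
  have hgradh : ∀ q, HasGradientAt h (gradient f q + lam • gradient g q) q := fun q =>
    (hdf q).hasGradientAt.add_const_mul (hdg q).hasGradientAt lam
  have hgh : ∀ q, gradient h q = gradient f q + lam • gradient g q := fun q => (hgradh q).gradient
  have hdh : Differentiable ℝ h := fun q => (hgradh q).differentiableAt
  have hK0 : 0 ≤ Lf + lam * Lg := by positivity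
  have hh_smooth : ∀ q r, ‖gradient h q - gradient h r‖ ≤ (Lf + lam * Lg) * ‖q - r‖ := by
    intro q r
    have e : gradient h q - gradient h r =
        (gradient f q - gradient f r) + lam • (gradient g q - gradient g r) := by
      rw [hgh, hgh]; module
    rw [e]
    refine (norm_add_le _ _).trans ?_
    rw [norm_smul, Real.norm_of_nonneg hlam0]
    have := mul_le_mul_of_nonneg_left (hg_smooth q r) hlam0
    linarith [hf_smooth q r]
  have hg_mono := fun x => strong_monotone hdg (hg_sc x)
  have hh_mono : ∀ x y y', (lam * μ - Lf) * ‖y' - y‖ ^ 2 ≤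
      ⟪gradient h (pt x y') - gradient h (pt x y), pt 0 (y' - y)⟫ := by
    intro x y y'
    have e : gradient h (pt x y') - gradient h (pt x y) =
        (gradient f (pt x y') - gradient f (pt x y)) +
          lam • (gradient g (pt x y') - gradient g (pt x y)) := by
      rw [hgh, hgh]; module
    rw [e, inner_add_left, inner_smul_left, conj_trivial]
    have h1 := mul_le_mul_of_nonneg_left (hg_mono x y y') hlam0
    have h2 := (abs_le.1 (abs_real_inner_le_norm
      (gradient f (pt x y') - gradient f (pt x y)) (pt 0 (y' - y)))).1
    have h3 := mul_le_mul_of_nonneg_right (hf_smooth (pt x y') (pt x y))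
      (norm_nonneg (pt (0 : Euc dx) (y' - y)))
    rw [pt_sub, sub_self, norm_pt_zero_left] at h3
    rw [norm_pt_zero_left] at h2
    linarith
  -- Both lower-level problems have minimisers.
  have hg_low : ∀ x y, g (pt x 0) - ‖gradient g (pt x 0)‖ * ‖y‖ + μ / 2 * ‖y‖ ^ 2 ≤ g (pt x y) := by
    intro x y
    have h1 := strong_convex_lower hdg (hg_sc x) 0 y
    have h2 := (abs_le.1 (abs_real_inner_le_norm (gradient g (pt x 0)) (pt 0 (y - 0)))).1
    rw [sub_zero] at h1 h2
    rw [norm_pt_zero_left] at h2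
    linarith
  have hcg : Continuous g := hgC2.continuous
  have hch : Continuous h := hfC2.continuous.add (continuous_const.mul hcg)
  have hex_g : ∀ x, ∃ y, ∀ y', g (pt x y) ≤ g (pt x y') := fun x =>
    exists_min (hcg.comp (continuous_pt x)) (half_pos hμ) (hg_low x)
  have hex_h : ∀ x, ∃ y, ∀ y', h (pt x y) ≤ h (pt x y') := fun x =>
    exists_min (a := f (pt x 0) + lam * g (pt x 0))
      (b := Cf + lam * ‖gradient g (pt x 0)‖) (c := lam * (μ / 2))
      (hch.comp (continuous_pt x)) (by positivity) (fun y => by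
        have h1 := (abs_le.1 (hf_lipy x y 0)).1
        have h2 := mul_le_mul_of_nonneg_left (hg_low x y) hlam0
        rw [sub_zero] at h1
        simp only [hh]
        linarith)
  choose ys hys using hex_g
  choose yl hyl using hex_h
  have hmpos : 0 < lam * μ - Lf := by linarith
  have hys_lip := minimizer_lipschitz hdg hμ hLg hg_mono hg_smooth hys
  have hyl_lip := minimizer_lipschitz hdh hmpos hK0 hh_mono hh_smooth hyl
  have hval : (fun x'' : Euc dx => ⨅ y : Euc dy,
      (f (pt x'' y) + lam * (g (pt x'' y) - ⨅ z : Euc dy, g (pt x'' z)))) =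
      fun x'' => h (pt x'' (yl x'')) + -lam * g (pt x'' (ys x'')) := by
    funext x''
    have hin : ⨅ z, g (pt x'' z) = g (pt x'' (ys x'')) :=
      iInf_eq_of_min (φ := fun z => g (pt x'' z)) (hys x'')
    rw [hin]
    rw [iInf_eq_of_min (φ := fun y => f (pt x'' y) + lam * (g (pt x'' y) - g (pt x'' (ys x''))))
      (i := yl x'') (fun y => by
        have := hyl x'' y
        simp only [hh] at this
        linarith)]
    simp only [hh]
    ring
  have hgrad : ∀ x, gradient (fun x'' : Euc dx => ⨅ y : Euc dy,
      (f (pt x'' y) + lam * (g (pt x'' y) - ⨅ z : Euc dy, g (pt x'' z)))) x =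
      (gradient h (pt x (yl x))).fst + -lam • (gradient g (pt x (ys x))).fst := by
    intro x
    rw [hval]
    exact ((hasGradientAt_value hdh hK0 hh_smooth hyl hyl_lip x).add_const_mul
      (hasGradientAt_value hdg hLg hg_smooth hys hys_lip x) (-lam)).gradient
  have hs : ∀ x, (gradient g (pt x (ys x))).snd = 0 := fun x => gradient_snd_eq_zero hdg (hys x)
  have hst : ∀ x, (gradient f (pt x (yl x)) + lam • gradient g (pt x (yl x))).snd = 0 :=
    fun x => by rw [← hgh]; exact gradient_snd_eq_zero hdh (hyl x)
  have hgap : ∀ x, ‖pt x (yl x) - pt x (ys x)‖ ≤ Cf / (lam * μ) := fun x =>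
    minimizer_gap hdf hμ hl hCf hf_lipy (hg_mono x (ys x) (yl x)) (hs x) (hst x)
  have hvb : ‖yl x' - yl x‖ ≤ (1 + 2 * (Lg / μ)) * ‖x' - x‖ := by
    refine (hyl_lip x x').trans (mul_le_mul_of_nonneg_right ?_ (norm_nonneg _))
    rw [div_le_iff₀ hmpos]
    have h1 : (1 + 2 * (Lg / μ)) * (lam * μ / 2) = lam * μ / 2 + lam * Lg := by
      field_simp
    have h2 : (1 + 2 * (Lg / μ)) * (lam * μ / 2) ≤ (1 + 2 * (Lg / μ)) * (lam * μ - Lf) :=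
      mul_le_mul_of_nonneg_left (by linarith) (by positivity)
    linarith
  have hfin := penalty_gradient_bound hμ hCf hLf hLg hρg hl hgC2 hg_smooth hg_hess hg_sc hf_smooth
    (pt_sub x' x (yl x') (yl x)) (pt_sub x' x (ys x') (ys x)) hvb (hgap x) (hgap x')
    (hst x) (hst x') (hs x) (hs x')
  rw [← hgh, ← hgh, WithLp.sub_fst, WithLp.sub_fst, WithLp.smul_fst, WithLp.sub_fst] at hfin
  rw [norm_sub_rev, hgrad, hgrad]
  have hrw : (gradient h (pt x' (yl x'))).fst + -lam • (gradient g (pt x' (ys x'))).fst -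
      ((gradient h (pt x (yl x))).fst + -lam • (gradient g (pt x (ys x))).fst) =
      (gradient h (pt x' (yl x'))).fst - (gradient h (pt x (yl x))).fst -
      lam • ((gradient g (pt x' (ys x'))).fst - (gradient g (pt x (ys x))).fst) := by
    module
  rw [hrw]
  rw [norm_sub_rev x x']
  refine hfin.trans (mul_le_mul_of_nonneg_right ?_ (norm_nonneg _))
  -- The two constants differ by `3 Lf Lg / μ`.
  have h1 : Lf + 4 * Lf * Lg / μ + Cf * ρg / μ + Cf * Lg * ρg / μ ^ 2
      + Lg * ((1 / μ + 2 * Lg / μ ^ 2) * (Lf + Cf * ρg / μ)) =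
      (Lf + Cf * ρg / μ) * (1 + 2 * (Lg / μ) + 2 * (Lg / μ) ^ 2) + 3 * (Lf * Lg / μ) := by
    field_simp
    ring
  rw [h1]
  have : 0 ≤ 3 * (Lf * Lg / μ) := by positivity
  linarith
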